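/- Let d ≥ 1, let Σ and Δ be positive definite real d×d matrices with C the positive definite square root of Σ^{-1}, let μ, t ∈ ℝ^d and r ∈ {0,1}^d, and let f_Δ(x) = (2π)^{-d/2} (det Δ)^{-1/2} exp(-(1/2) xᵀ Δ^{-1} x) be the density of N_d(0,Δ). Define g̃((x,r), t) = cos(⟨t, C((x-μ) ⊙ r)⟩) + sin(⟨t, C((x-μ) ⊙ r)⟩) - exp(-‖t‖²/2). Then ∫_{ℝ^d} g̃((x,r), t) f_Δ(x) dx = ( cos(⟨t, C(μ ⊙ r)⟩) - sin(⟨t, C(μ ⊙ r)⟩) ) · exp(-(1/2) ((Ct) ⊙ r)ᵀ Δ ((Ct) ⊙ r)) - exp(-‖t‖²/2). -/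

import Mathlib

open MeasureTheory Real Matrix

/-- Density of the `N_d(0, Δ)` distribution:
`f_Δ(x) = (2π)^{-d/2} (det Δ)^{-1/2} exp(-(1/2) xᵀ Δ⁻¹ x)`. -/
noncomputable def normalDensity (d : ℕ) (Δ : Matrix (Fin d) (Fin d) ℝ) (x : Fin d → ℝ) : ℝ :=
  (2 * π) ^ (-(d : ℝ) / 2) * (Δ.det) ^ (-(1 : ℝ) / 2)
    * Real.exp (-(1 / 2) * (x ⬝ᵥ (Δ⁻¹ *ᵥ x)))

/-- Componentwise (Hadamard–Schur) product of vectors. -/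
def hadamard {d : ℕ} (a b : Fin d → ℝ) : Fin d → ℝ := fun i => a i * b i

/-- The imputed BHEP integrand
`g̃((x,r),t) = cos⟨t, C((x-μ)⊙r)⟩ + sin⟨t, C((x-μ)⊙r)⟩ - exp(-‖t‖²/2)` with `C = Σ^{-1/2}`. -/
noncomputable def bhepGImp (d : ℕ) (C : Matrix (Fin d) (Fin d) ℝ) (μ : Fin d → ℝ)
    (x r t : Fin d → ℝ) : ℝ :=
  Real.cos (∑ i, t i * (C *ᵥ hadamard (x - μ) r) i)
    + Real.sin (∑ i, t i * (C *ᵥ hadamard (x - μ) r) i)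
    - Real.exp (-(∑ i, t i ^ 2) / 2)

/-!
Factoring a positive definite `P` as `Bᵀ B` and substituting `v = B x` reduces the integral of
`exp (-b xᵀ P x + c ⟨w, x⟩)` to the isotropic one. For `P = Δ⁻¹`, `b = 1 / 2` and `c = i` this is
the characteristic function `exp (-wᵀ Δ w / 2)` of `N(0, Δ)`, whose real and imaginary parts are
the integrals of `cos ⟨w, x⟩` and `sin ⟨w, x⟩`, the latter zero. With `w = (Cᵀ t) ⊙ r` one has
`⟨t, C ((x - μ) ⊙ r)⟩ = ⟨w, x⟩ - ⟨w, μ⟩`, and the addition formulas for `cos` and `sin` leave a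
linear combination of these integrals.
-/

section LinearChangeOfVariables

variable {E F : Type*} [NormedAddCommGroup E] [NormedSpace ℝ E] [FiniteDimensional ℝ E]
  [MeasurableSpace E] [BorelSpace E] [NormedAddCommGroup F] {f : E →ₗ[ℝ] E}

theorem measurableEmbedding_of_linearMap_det_ne_zero (hf : LinearMap.det f ≠ 0) :
    MeasurableEmbedding f :=
  (f.equivOfDetNeZero hf).toContinuousLinearEquiv.toHomeomorph.measurableEmbedding

variable (μ : Measure E) [μ.IsAddHaarMeasure]

theorem integrable_comp_linearMap_iff (hf : LinearMap.det f ≠ 0) (g : E → F) :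
    Integrable (fun x => g (f x)) μ ↔ Integrable g μ := by
  have hmap := (measurableEmbedding_of_linearMap_det_ne_zero hf).integrable_map_iff
    (μ := μ) (g := g)
  rw [Measure.map_linearMap_addHaar_eq_smul_addHaar μ hf,
    integrable_smul_measure (by simpa using hf) ENNReal.ofReal_ne_top] at hmap
  exact hmap.symm

theorem integral_comp_linearMap [NormedSpace ℝ F] (hf : LinearMap.det f ≠ 0) (g : E → F) :
    ∫ x, g (f x) ∂μ = |LinearMap.det f|⁻¹ • ∫ x, g x ∂μ := by
  rw [← (measurableEmbedding_of_linearMap_det_ne_zero hf).integral_map,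
    Measure.map_linearMap_addHaar_eq_smul_addHaar μ hf, integral_smul_measure,
    ENNReal.toReal_ofReal (abs_nonneg _), abs_inv]

end LinearChangeOfVariables

section GaussianIntegral

variable {ι : Type*} [Fintype ι]

theorem dotProduct_transpose_mul_self_mulVec {κ R : Type*} [Fintype κ] [CommSemiring R]
    (B : Matrix κ ι R) (x : ι → R) : x ⬝ᵥ ((Bᵀ * B) *ᵥ x) = ∑ k, (B *ᵥ x) k ^ 2 := by
  rw [← mulVec_mulVec, dotProduct_mulVec, vecMul_transpose]
  simp only [dotProduct, sq]

open scoped MatrixOrder in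
theorem exists_det_ne_zero_and_eq_transpose_mul_self [DecidableEq ι] {P : Matrix ι ι ℝ}
    (hP : P.PosDef) : ∃ B : Matrix ι ι ℝ, B.det ≠ 0 ∧ P = Bᵀ * B := by
  obtain ⟨B, hB, rfl⟩ :=
    CStarAlgebra.isStrictlyPositive_iff_eq_star_mul_self.mp hP.isStrictlyPositive
  exact ⟨B, ((isUnit_iff_isUnit_det B).mp hB).ne_zero, rfl⟩

theorem cexp_neg_mul_dotProduct_transpose_mul_self_add [DecidableEq ι] {B : Matrix ι ι ℝ}
    (hB : B.det ≠ 0) (b c : ℂ) (w x : ι → ℝ) :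
    Complex.exp (-b * (x ⬝ᵥ ((Bᵀ * B) *ᵥ x) : ℝ) + c * (w ⬝ᵥ x : ℝ))
      = Complex.exp (-b * ∑ i, ((B *ᵥ x) i : ℂ) ^ 2
        + ∑ i, c * ((w ᵥ* B⁻¹) i : ℂ) * (B *ᵥ x) i) := by
  have hlin : w ⬝ᵥ x = (w ᵥ* B⁻¹) ⬝ᵥ (B *ᵥ x) := by
    rw [← dotProduct_mulVec, mulVec_mulVec, nonsing_inv_mul B hB.isUnit, one_mulVec]
  rw [dotProduct_transpose_mul_self_mulVec, hlin]
  simp only [dotProduct, Complex.ofReal_sum, Complex.ofReal_mul, Complex.ofReal_pow,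
    Finset.mul_sum, mul_assoc]

variable {P : Matrix ι ι ℝ} {b : ℂ}

theorem integrable_cexp_neg_mul_dotProduct_add (hP : P.PosDef) (hb : 0 < b.re) (c : ℂ)
    (w : ι → ℝ) :
    Integrable fun x : ι → ℝ =>
      Complex.exp (-b * (x ⬝ᵥ (P *ᵥ x) : ℝ) + c * (w ⬝ᵥ x : ℝ)) := by
  classical
  obtain ⟨B, hB, rfl⟩ := exists_det_ne_zero_and_eq_transpose_mul_self hP
  simp only [cexp_neg_mul_dotProduct_transpose_mul_self_add hB]
  exact (integrable_comp_linearMap_iff volume (f := toLin' B) (by rwa [LinearMap.det_toLin']) _).2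
    (GaussianFourier.integrable_cexp_neg_mul_sum_add hb fun i => c * ((w ᵥ* B⁻¹) i : ℂ))

theorem integral_cexp_neg_mul_dotProduct_add [DecidableEq ι] (hP : P.PosDef) (hb : 0 < b.re)
    (c : ℂ) (w : ι → ℝ) :
    ∫ x : ι → ℝ, Complex.exp (-b * (x ⬝ᵥ (P *ᵥ x) : ℝ) + c * (w ⬝ᵥ x : ℝ))
      = ((√P.det)⁻¹ : ℝ) * (π / b) ^ (Fintype.card ι / 2 : ℂ)
        * Complex.exp (c ^ 2 * (w ⬝ᵥ (P⁻¹ *ᵥ w) : ℝ) / (4 * b)) := by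
  obtain ⟨B, hB, rfl⟩ := exists_det_ne_zero_and_eq_transpose_mul_self hP
  have hdet : √(Bᵀ * B).det = |B.det| := by
    rw [det_mul, det_transpose, Real.sqrt_mul_self_eq_abs]
  have hquad : w ⬝ᵥ ((Bᵀ * B)⁻¹ *ᵥ w) = ∑ i, (w ᵥ* B⁻¹) i ^ 2 := by
    rw [Matrix.mul_inv_rev, ← transpose_nonsing_inv, ← mulVec_transpose,
      ← dotProduct_transpose_mul_self_mulVec, transpose_transpose]
  have hsum : ∑ i, (c * ((w ᵥ* B⁻¹) i : ℂ)) ^ 2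
      = c ^ 2 * (w ⬝ᵥ ((Bᵀ * B)⁻¹ *ᵥ w) : ℝ) := by
    rw [hquad]
    simp only [mul_pow, Finset.mul_sum, Complex.ofReal_sum, Complex.ofReal_pow]
  simp only [cexp_neg_mul_dotProduct_transpose_mul_self_add hB]
  have hsubst := integral_comp_linearMap volume (f := toLin' B) (by rwa [LinearMap.det_toLin'])
    fun v : ι → ℝ => Complex.exp (-b * ∑ i, (v i : ℂ) ^ 2
      + ∑ i, c * ((w ᵥ* B⁻¹) i : ℂ) * v i)
  simp only [toLin'_apply, LinearMap.det_toLin'] at hsubst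
  rw [hsubst, GaussianFourier.integral_cexp_neg_mul_sum_add hb, hsum, hdet, Complex.real_smul,
    mul_assoc]

end GaussianIntegral

section NormalDensity

variable {d : ℕ} {Δ : Matrix (Fin d) (Fin d) ℝ}

theorem cexp_mul_normalDensity_eq (Δ : Matrix (Fin d) (Fin d) ℝ) (c : ℂ) (w x : Fin d → ℝ) :
    Complex.exp (c * (w ⬝ᵥ x : ℝ)) * (normalDensity d Δ x : ℂ)
      = ((2 * π) ^ (-(d : ℝ) / 2) * Δ.det ^ (-(1 : ℝ) / 2) : ℝ)
        * Complex.exp (-(1 / 2) * (x ⬝ᵥ (Δ⁻¹ *ᵥ x) : ℝ) + c * (w ⬝ᵥ x : ℝ)) := by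
  rw [normalDensity, Complex.exp_add]
  push_cast
  ring

theorem integrable_cexp_mul_normalDensity (hΔ : Δ.PosDef) (c : ℂ) (w : Fin d → ℝ) :
    Integrable fun x : Fin d → ℝ =>
      Complex.exp (c * (w ⬝ᵥ x : ℝ)) * (normalDensity d Δ x : ℂ) := by
  simp only [cexp_mul_normalDensity_eq]
  exact (integrable_cexp_neg_mul_dotProduct_add hΔ.inv (by norm_num) c w).const_mul _

theorem normalDensity_const_eq_inv (hΔ : 0 ≤ Δ.det) :
    (2 * π) ^ (-(d : ℝ) / 2) * Δ.det ^ (-(1 : ℝ) / 2)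
      = ((√Δ⁻¹.det)⁻¹ * (2 * π) ^ ((d : ℝ) / 2))⁻¹ := by
  rw [neg_div, neg_div, Real.rpow_neg (by positivity), Real.rpow_neg hΔ, ← Real.sqrt_eq_rpow,
    det_nonsing_inv, Ring.inverse_eq_inv', Real.sqrt_inv, inv_inv, mul_inv,
    mul_comm]

theorem integral_cexp_mul_normalDensity (hΔ : Δ.PosDef) (c : ℂ) (w : Fin d → ℝ) :
    ∫ x : Fin d → ℝ, Complex.exp (c * (w ⬝ᵥ x : ℝ)) * (normalDensity d Δ x : ℂ)
      = Complex.exp (c ^ 2 * (w ⬝ᵥ (Δ *ᵥ w) : ℝ) / 2) := by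
  have hpow : ((π : ℂ) / (1 / 2)) ^ ((d : ℂ) / 2) = ((2 * π) ^ ((d : ℝ) / 2) : ℝ) := by
    rw [Complex.ofReal_cpow (by positivity)]
    push_cast
    congr 1
    ring
  have hone : (((2 * π) ^ (-(d : ℝ) / 2) * Δ.det ^ (-(1 : ℝ) / 2) : ℝ) : ℂ)
      * (((√Δ⁻¹.det)⁻¹ : ℝ) * ((2 * π) ^ ((d : ℝ) / 2) : ℝ)) = 1 := by
    have hpos : 0 < √Δ⁻¹.det := Real.sqrt_pos.2 hΔ.inv.det_pos
    rw [normalDensity_const_eq_inv hΔ.det_pos.le]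
    exact_mod_cast inv_mul_cancel₀ (by positivity)
  simp only [cexp_mul_normalDensity_eq]
  rw [integral_const_mul, integral_cexp_neg_mul_dotProduct_add hΔ.inv (by norm_num),
    Fintype.card_fin, hpow, nonsing_inv_nonsing_inv _ hΔ.det_pos.ne'.isUnit,
    show (4 * (1 / 2) : ℂ) = 2 by norm_num, ← mul_assoc, hone, one_mul]

theorem re_cexp_I_mul_normalDensity (w x : Fin d → ℝ) :
    (Complex.exp (Complex.I * (w ⬝ᵥ x : ℝ)) * (normalDensity d Δ x : ℂ)).re
      = Real.cos (w ⬝ᵥ x) * normalDensity d Δ x := by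
  rw [Complex.re_mul_ofReal, mul_comm Complex.I, Complex.exp_ofReal_mul_I_re]

theorem im_cexp_I_mul_normalDensity (w x : Fin d → ℝ) :
    (Complex.exp (Complex.I * (w ⬝ᵥ x : ℝ)) * (normalDensity d Δ x : ℂ)).im
      = Real.sin (w ⬝ᵥ x) * normalDensity d Δ x := by
  rw [Complex.im_mul_ofReal, mul_comm Complex.I, Complex.exp_ofReal_mul_I_im]

theorem integrable_cos_mul_normalDensity (hΔ : Δ.PosDef) (w : Fin d → ℝ) :
    Integrable fun x : Fin d → ℝ => Real.cos (w ⬝ᵥ x) * normalDensity d Δ x := by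
  simpa only [RCLike.re_eq_complex_re, re_cexp_I_mul_normalDensity] using
    (integrable_cexp_mul_normalDensity hΔ Complex.I w).re

theorem integrable_sin_mul_normalDensity (hΔ : Δ.PosDef) (w : Fin d → ℝ) :
    Integrable fun x : Fin d → ℝ => Real.sin (w ⬝ᵥ x) * normalDensity d Δ x := by
  simpa only [RCLike.im_eq_complex_im, im_cexp_I_mul_normalDensity] using
    (integrable_cexp_mul_normalDensity hΔ Complex.I w).im

theorem integrable_normalDensity (hΔ : Δ.PosDef) : Integrable (normalDensity d Δ) := by
  simpa using integrable_cos_mul_normalDensity hΔ 0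

theorem integral_cexp_I_mul_normalDensity (hΔ : Δ.PosDef) (w : Fin d → ℝ) :
    ∫ x : Fin d → ℝ, Complex.exp (Complex.I * (w ⬝ᵥ x : ℝ)) * (normalDensity d Δ x : ℂ)
      = (Real.exp (-(1 / 2) * (w ⬝ᵥ (Δ *ᵥ w))) : ℂ) := by
  rw [integral_cexp_mul_normalDensity hΔ, Complex.I_sq, Complex.ofReal_exp]
  push_cast
  ring_nf

theorem integral_cos_mul_normalDensity (hΔ : Δ.PosDef) (w : Fin d → ℝ) :
    ∫ x : Fin d → ℝ, Real.cos (w ⬝ᵥ x) * normalDensity d Δ x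
      = Real.exp (-(1 / 2) * (w ⬝ᵥ (Δ *ᵥ w))) := by
  simpa only [RCLike.re_eq_complex_re, re_cexp_I_mul_normalDensity,
    integral_cexp_I_mul_normalDensity hΔ, Complex.ofReal_re] using
    integral_re (integrable_cexp_mul_normalDensity hΔ Complex.I w)

theorem integral_sin_mul_normalDensity (hΔ : Δ.PosDef) (w : Fin d → ℝ) :
    ∫ x : Fin d → ℝ, Real.sin (w ⬝ᵥ x) * normalDensity d Δ x = 0 := by
  simpa only [RCLike.im_eq_complex_im, im_cexp_I_mul_normalDensity,
    integral_cexp_I_mul_normalDensity hΔ, Complex.ofReal_im] using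
    integral_im (integrable_cexp_mul_normalDensity hΔ Complex.I w)

theorem integral_normalDensity (hΔ : Δ.PosDef) : ∫ x, normalDensity d Δ x = 1 := by
  simpa using integral_cos_mul_normalDensity hΔ 0

theorem integral_cos_add_sin_sub_mul_normalDensity (hΔ : Δ.PosDef) (w : Fin d → ℝ)
    (α β γ : ℝ) :
    ∫ x : Fin d → ℝ,
        (α * Real.cos (w ⬝ᵥ x) + β * Real.sin (w ⬝ᵥ x) - γ) * normalDensity d Δ x
      = α * Real.exp (-(1 / 2) * (w ⬝ᵥ (Δ *ᵥ w))) - γ := by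
  have hcos := (integrable_cos_mul_normalDensity hΔ w).const_mul α
  have hsin := (integrable_sin_mul_normalDensity hΔ w).const_mul β
  have hone := (integrable_normalDensity hΔ).const_mul γ
  simp only [sub_mul, add_mul, mul_assoc]
  rw [integral_sub (by exact hcos.add hsin) hone, integral_add hcos hsin]
  simp only [integral_const_mul, integral_cos_mul_normalDensity hΔ,
    integral_sin_mul_normalDensity hΔ, integral_normalDensity hΔ, mul_zero, add_zero, mul_one]

end NormalDensity

section ImputedBHEP

variable {d : ℕ}

theorem sum_mul_mulVec_hadamard (C : Matrix (Fin d) (Fin d) ℝ) (t x r : Fin d → ℝ) :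
    ∑ i, t i * (C *ᵥ hadamard x r) i = hadamard (Cᵀ *ᵥ t) r ⬝ᵥ x := by
  change t ⬝ᵥ (C *ᵥ _root_.hadamard x r) = _
  rw [dotProduct_mulVec, ← mulVec_transpose]
  simp only [dotProduct, _root_.hadamard, mul_assoc, mul_comm (r _)]

theorem bhepGImp_eq (C : Matrix (Fin d) (Fin d) ℝ) (μ x r t : Fin d → ℝ) :
    bhepGImp d C μ x r t
      = (Real.cos (hadamard (Cᵀ *ᵥ t) r ⬝ᵥ μ) - Real.sin (hadamard (Cᵀ *ᵥ t) r ⬝ᵥ μ))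
          * Real.cos (hadamard (Cᵀ *ᵥ t) r ⬝ᵥ x)
        + (Real.cos (hadamard (Cᵀ *ᵥ t) r ⬝ᵥ μ) + Real.sin (hadamard (Cᵀ *ᵥ t) r ⬝ᵥ μ))
          * Real.sin (hadamard (Cᵀ *ᵥ t) r ⬝ᵥ x)
        - Real.exp (-(∑ i, t i ^ 2) / 2) := by
  rw [bhepGImp, sum_mul_mulVec_hadamard, dotProduct_sub, Real.cos_sub, Real.sin_sub]
  ring

end ImputedBHEP

theorem imputed_bhep_conditional_expectation_general {d : ℕ} {Δ : Matrix (Fin d) (Fin d) ℝ}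
    (hΔ : Δ.PosDef) (C : Matrix (Fin d) (Fin d) ℝ) (μ t r : Fin d → ℝ) :
    (∫ x : Fin d → ℝ, bhepGImp d C μ x r t * normalDensity d Δ x)
      = (Real.cos (∑ i, t i * (C *ᵥ hadamard μ r) i)
          - Real.sin (∑ i, t i * (C *ᵥ hadamard μ r) i))
        * Real.exp (-(1 / 2) * (hadamard (Cᵀ *ᵥ t) r ⬝ᵥ (Δ *ᵥ hadamard (Cᵀ *ᵥ t) r)))
        - Real.exp (-(∑ i, t i ^ 2) / 2) := by
  simp only [bhepGImp_eq, sum_mul_mulVec_hadamard,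
    integral_cos_add_sin_sub_mul_normalDensity hΔ]

/-- Conditional expectation of the imputed BHEP integrand under `X ~ N_d(0,Δ)`:
`∫ g̃((x,r),t) f_Δ(x) dx = (cos⟨t, C(μ⊙r)⟩ - sin⟨t, C(μ⊙r)⟩)
  · exp(-(1/2)((Ct)⊙r)ᵀ Δ ((Ct)⊙r)) - exp(-‖t‖²/2)`,
where `C` is the positive definite square root of `Σ⁻¹`. -/
theorem imputed_bhep_conditional_expectation (d : ℕ) (hd : 1 ≤ d)
    (S Δ : Matrix (Fin d) (Fin d) ℝ) (hS : S.PosDef) (hΔ : Δ.PosDef)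
    (C : Matrix (Fin d) (Fin d) ℝ) (hC : C.PosDef) (hCsq : C * C = S⁻¹)
    (μ t : Fin d → ℝ) (r : Fin d → ℝ) (hr : ∀ i, r i = 0 ∨ r i = 1) :
    (∫ x : Fin d → ℝ, bhepGImp d C μ x r t * normalDensity d Δ x)
      = (Real.cos (∑ i, t i * (C *ᵥ hadamard μ r) i)
          - Real.sin (∑ i, t i * (C *ᵥ hadamard μ r) i))
        * Real.exp (-(1 / 2) * (hadamard (C *ᵥ t) r ⬝ᵥ (Δ *ᵥ hadamard (C *ᵥ t) r)))
        - Real.exp (-(∑ i, t i ^ 2) / 2) := by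
  simpa only [(isHermitian_iff_isSymm.mp hC.isHermitian).eq] using
    imputed_bhep_conditional_expectation_general hΔ C μ t r
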